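/- Let N ≥ 0 be an integer, let r > 0, and let u : ℂ → ℂ be of class C^{N+1} on a neighborhood of the closed disk B̄_r(0). Then for every integer l with |l| ≥ N+1, | (1/2π) ∫_0^{2π} u(r e^{iθ}) e^{−ilθ} dθ | ≤ (2r)^{N+1} · ((|l|−N−1)!/|l|!) · ‖u‖_{C^{N+1}(B̄_r)}. -/

import Mathlib

/-! Write `c_l(v)` for the `l`-th Fourier coefficient of `θ ↦ v (r e^{iθ})`. Since
`d/dθ v(r e^{iθ}) = r (-sin θ ∂ₓv + cos θ ∂_y v)`, integrating by parts once over a period gives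
`l c_l(v) = (r/2) ((c_{l-1} - c_{l+1})(∂ₓv) - i (c_{l-1} + c_{l+1})(∂_y v))`
(`fourierCircle_recursion`). Hence one derivative of `v` gains a factor `2r/|l|`, at the price of
lowering `|l|` by at most one. Iterating `n` times (`fourierCircle_bound`) produces
`(2r)^n / (|l| (|l|-1) ⋯ (|l|-n+1))` times a bound for the derivatives of order `n`. The
derivatives produced by the iteration occur in arbitrary order; the symmetry of second derivatives
(`Dx_Dy_comm`) brings them to the normal form `∂ₓᵃ ∂_yᵇ` used in `ckNormDisk`. -/

/-- The partial derivative `∂ₓu` of `u : ℂ → ℂ` in the real coordinate `x` (`z = x + iy`). -/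
noncomputable def Dx (u : ℂ → ℂ) : ℂ → ℂ := fun z => fderiv ℝ u z 1

/-- The partial derivative `∂_y u` of `u : ℂ → ℂ` in the real coordinate `y` (`z = x + iy`). -/
noncomputable def Dy (u : ℂ → ℂ) : ℂ → ℂ := fun z => fderiv ℝ u z Complex.I

/-- The `C^k` norm of `u` on the closed disk of radius `r` about `0`:
the maximum over multi-indices `(a, b)` with `a + b ≤ k` of the sup over the disk
of `‖∂ₓᵃ ∂_yᵇ u‖`. -/
noncomputable def ckNormDisk (k : ℕ) (r : ℝ) (u : ℂ → ℂ) : ℝ :=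
  ⨆ p : {p : ℕ × ℕ // p.1 + p.2 ≤ k},
    ⨆ z : Metric.closedBall (0:ℂ) r, ‖Dx^[p.1.1] (Dy^[p.1.2] u) z.1‖

/-- The `l`-th Fourier coefficient of `θ ↦ v (r e^{iθ})`. -/
noncomputable def fourierCircle (r : ℝ) (v : ℂ → ℂ) (l : ℤ) : ℂ :=
  (1 / (2 * Real.pi) : ℂ) *
    ∫ θ in (0:ℝ)..(2 * Real.pi),
      v (r * Complex.exp (θ * Complex.I)) * Complex.exp (-(l * θ) * Complex.I)

/-! ### Iterated partial derivatives on an open set -/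

theorem contDiffOn_fderiv_apply {U : Set ℂ} (hU : IsOpen U) {n : ℕ} {v : ℂ → ℂ} (w : ℂ)
    (hv : ContDiffOn ℝ (n + 1 : ℕ) v U) :
    ContDiffOn ℝ n (fun z => fderiv ℝ v z w) U := by
  have h : ContDiffOn ℝ n (fderiv ℝ v) U := hv.fderiv_of_isOpen hU (by norm_cast)
  exact h.clm_apply contDiffOn_const

theorem Dx_contDiffOn {U : Set ℂ} (hU : IsOpen U) {n : ℕ} {v : ℂ → ℂ}
    (hv : ContDiffOn ℝ (n + 1 : ℕ) v U) : ContDiffOn ℝ n (Dx v) U :=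
  contDiffOn_fderiv_apply hU 1 hv

theorem Dy_contDiffOn {U : Set ℂ} (hU : IsOpen U) {n : ℕ} {v : ℂ → ℂ}
    (hv : ContDiffOn ℝ (n + 1 : ℕ) v U) : ContDiffOn ℝ n (Dy v) U :=
  contDiffOn_fderiv_apply hU Complex.I hv

theorem Dx_iter_contDiffOn {U : Set ℂ} (hU : IsOpen U) {n : ℕ} (a : ℕ) {v : ℂ → ℂ}
    (hv : ContDiffOn ℝ (n + a : ℕ) v U) : ContDiffOn ℝ n (Dx^[a] v) U := by
  induction a generalizing v with
  | zero => exact hv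
  | succ a ih => exact ih (Dx_contDiffOn hU hv)

theorem Dy_iter_contDiffOn {U : Set ℂ} (hU : IsOpen U) {n : ℕ} (a : ℕ) {v : ℂ → ℂ}
    (hv : ContDiffOn ℝ (n + a : ℕ) v U) : ContDiffOn ℝ n (Dy^[a] v) U := by
  induction a generalizing v with
  | zero => exact hv
  | succ a ih => exact ih (Dy_contDiffOn hU hv)

theorem fderiv_eqOn {U : Set ℂ} (hU : IsOpen U) {f g : ℂ → ℂ} (h : Set.EqOn f g U) {z : ℂ}
    (hz : z ∈ U) : fderiv ℝ f z = fderiv ℝ g z :=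
  (h.eventuallyEq_of_mem (hU.mem_nhds hz)).fderiv_eq

theorem Dx_eqOn {U : Set ℂ} (hU : IsOpen U) {f g : ℂ → ℂ} (h : Set.EqOn f g U) :
    Set.EqOn (Dx f) (Dx g) U := fun z hz => by
  simp only [Dx, fderiv_eqOn hU h hz]

theorem Dy_eqOn {U : Set ℂ} (hU : IsOpen U) {f g : ℂ → ℂ} (h : Set.EqOn f g U) :
    Set.EqOn (Dy f) (Dy g) U := fun z hz => by
  simp only [Dy, fderiv_eqOn hU h hz]

theorem Dx_iter_eqOn {U : Set ℂ} (hU : IsOpen U) (a : ℕ) {f g : ℂ → ℂ} (h : Set.EqOn f g U) :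
    Set.EqOn (Dx^[a] f) (Dx^[a] g) U := by
  induction a generalizing f g with
  | zero => exact h
  | succ a ih => exact ih (Dx_eqOn hU h)

theorem Dy_iter_eqOn {U : Set ℂ} (hU : IsOpen U) (a : ℕ) {f g : ℂ → ℂ} (h : Set.EqOn f g U) :
    Set.EqOn (Dy^[a] f) (Dy^[a] g) U := by
  induction a generalizing f g with
  | zero => exact h
  | succ a ih => exact ih (Dy_eqOn hU h)

theorem Dx_Dy_comm {U : Set ℂ} (hU : IsOpen U) {v : ℂ → ℂ}
    (hv : ContDiffOn ℝ (2 : ℕ) v U) : Set.EqOn (Dy (Dx v)) (Dx (Dy v)) U := fun z hz => by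
  have hva : ContDiffAt ℝ (2 : ℕ) v z := hv.contDiffAt (hU.mem_nhds hz)
  have hs : IsSymmSndFDerivAt ℝ v z := hva.isSymmSndFDerivAt (by simp)
  have hd : DifferentiableAt ℝ (fderiv ℝ v) z :=
    (hva.fderiv_right (m := 1) (by norm_num)).differentiableAt (by norm_num)
  have key : ∀ w w' : ℂ, fderiv ℝ (fun y => fderiv ℝ v y w) z w'
      = fderiv ℝ (fderiv ℝ v) z w' w := fun w w' => by
    rw [fderiv_clm_apply hd (differentiableAt_const w)]
    simp
  change fderiv ℝ (fun y => fderiv ℝ v y 1) z Complex.I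
    = fderiv ℝ (fun y => fderiv ℝ v y Complex.I) z 1
  rw [key, key]
  exact hs.eq _ _

/-- Iterated symmetry of second derivatives: `∂_yᵇ ∂ₓ v = ∂ₓ ∂_yᵇ v` on `U`. -/
theorem Dy_iter_Dx {U : Set ℂ} (hU : IsOpen U) (b : ℕ) {v : ℂ → ℂ}
    (hv : ContDiffOn ℝ (b + 1 : ℕ) v U) : Set.EqOn (Dy^[b] (Dx v)) (Dx (Dy^[b] v)) U := by
  induction b generalizing v with
  | zero => exact fun _ _ => rfl
  | succ b ih =>
    have h1 : Set.EqOn (Dy^[b] (Dy (Dx v))) (Dy^[b] (Dx (Dy v))) U :=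
      Dy_iter_eqOn hU b (Dx_Dy_comm hU (hv.of_le (by norm_cast; omega)))
    exact h1.trans (ih (Dy_contDiffOn hU hv))

/-! ### Fourier coefficients on the circle -/

theorem circle_mem {r : ℝ} (hr : 0 < r) (θ : ℝ) :
    (r * Complex.exp (θ * Complex.I) : ℂ) ∈ Metric.closedBall (0:ℂ) r := by
  simp [Complex.norm_exp_ofReal_mul_I, abs_of_pos hr]

theorem fourierCircle_integrand_continuous {r : ℝ} (hr : 0 < r) {U : Set ℂ}
    (hUb : Metric.closedBall (0:ℂ) r ⊆ U) {v : ℂ → ℂ} (hv : ContinuousOn v U) (l : ℤ) :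
    Continuous fun θ : ℝ => v (r * Complex.exp (θ * Complex.I)) *
      Complex.exp (-(l * θ) * Complex.I) := by
  have h : Continuous fun θ : ℝ => v (r * Complex.exp (θ * Complex.I)) :=
    hv.comp_continuous (by fun_prop) fun θ => hUb (circle_mem hr θ)
  exact h.mul (by fun_prop)

/-- Integration by parts over a period, with `sin` and `cos` expanded into exponentials. -/
theorem fourierCircle_recursion {r : ℝ} (hr : 0 < r) {U : Set ℂ} (hU : IsOpen U)
    (hUb : Metric.closedBall (0:ℂ) r ⊆ U) {v : ℂ → ℂ} (hv : ContDiffOn ℝ 1 v U) (l : ℤ) :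
    (l : ℂ) * fourierCircle r v l =
      r / 2 * ((fourierCircle r (Dx v) (l - 1) - fourierCircle r (Dx v) (l + 1)) -
        Complex.I * (fourierCircle r (Dy v) (l - 1) + fourierCircle r (Dy v) (l + 1))) := by
  have hvc := hv.continuousOn
  have hv' : ContDiffOn ℝ ((0 + 1 : ℕ)) v U := by simpa using hv
  have hxc : ContinuousOn (Dx v) U := (Dx_contDiffOn (n := 0) hU hv').continuousOn
  have hyc : ContinuousOn (Dy v) U := (Dy_contDiffOn (n := 0) hU hv').continuousOn
  have c0 := fourierCircle_integrand_continuous hr hUb hvc l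
  have cx1 := fourierCircle_integrand_continuous hr hUb hxc (l - 1)
  have cx2 := fourierCircle_integrand_continuous hr hUb hxc (l + 1)
  have cy1 := fourierCircle_integrand_continuous hr hUb hyc (l - 1)
  have cy2 := fourierCircle_integrand_continuous hr hUb hyc (l + 1)
  -- The derivative of `v(r e^{iθ}) e^{-ilθ}`, arranged as a combination of Fourier integrands.
  have hder : ∀ θ : ℝ, HasDerivAt
      (fun θ : ℝ => v (r * Complex.exp (θ * Complex.I)) * Complex.exp (-(l * θ) * Complex.I))
      ((r / 2 * Complex.I) * ((Dx v (r * Complex.exp (θ * Complex.I)) *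
            Complex.exp (-((l - 1 : ℤ) * θ) * Complex.I) -
          Dx v (r * Complex.exp (θ * Complex.I)) *
            Complex.exp (-((l + 1 : ℤ) * θ) * Complex.I)) -
        Complex.I * (Dy v (r * Complex.exp (θ * Complex.I)) *
            Complex.exp (-((l - 1 : ℤ) * θ) * Complex.I) +
          Dy v (r * Complex.exp (θ * Complex.I)) *
            Complex.exp (-((l + 1 : ℤ) * θ) * Complex.I))) -
        (l * Complex.I) * (v (r * Complex.exp (θ * Complex.I)) *
            Complex.exp (-(l * θ) * Complex.I))) θ := by
    intro θ
    have hofReal : HasDerivAt (fun t : ℝ => (t : ℂ)) 1 θ := Complex.ofRealCLM.hasDerivAt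
    have hγ : HasDerivAt (fun t : ℝ => (r * Complex.exp (t * Complex.I) : ℂ))
        (r * (Complex.exp (θ * Complex.I) * (1 * Complex.I))) θ :=
      ((hofReal.mul_const Complex.I).cexp).const_mul (r : ℂ)
    have hexp : HasDerivAt (fun t : ℝ => Complex.exp (-(l * t) * Complex.I))
        (Complex.exp (-(l * θ) * Complex.I) * (-(l * 1) * Complex.I)) θ :=
      (((hofReal.const_mul (l : ℂ)).neg).mul_const Complex.I).cexp
    have hvd : HasFDerivAt v (fderiv ℝ v (r * Complex.exp (θ * Complex.I)))
        (r * Complex.exp (θ * Complex.I)) :=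
      ((hv.contDiffAt (hU.mem_nhds (hUb (circle_mem hr θ)))).differentiableAt
        (by norm_num)).hasFDerivAt
    have hmain := (hvd.comp_hasDerivAt θ hγ).mul hexp
    refine hmain.congr_deriv ?_
    have hdir : (r * (Complex.exp (θ * Complex.I) * (1 * Complex.I)) : ℂ)
        = (-(r * Real.sin θ)) • (1 : ℂ) + (r * Real.cos θ) • Complex.I := by
      rw [Complex.exp_mul_I]
      simp only [Complex.real_smul]
      push_cast
      linear_combination (r * Complex.sin θ : ℂ) * Complex.I_sq
    have e1 : Complex.exp (-((l - 1 : ℤ) * θ) * Complex.I)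
        = Complex.exp (-(l * θ) * Complex.I) * (Complex.cos θ + Complex.sin θ * Complex.I) := by
      rw [← Complex.exp_mul_I, ← Complex.exp_add]
      congr 1; push_cast; ring
    have e2 : Complex.exp (-((l + 1 : ℤ) * θ) * Complex.I)
        = Complex.exp (-(l * θ) * Complex.I) * (Complex.cos θ - Complex.sin θ * Complex.I) := by
      have : (Complex.cos θ - Complex.sin θ * Complex.I : ℂ)
          = Complex.cos (-θ) + Complex.sin (-θ) * Complex.I := by
        rw [Complex.cos_neg, Complex.sin_neg]; ring
      rw [this, ← Complex.exp_mul_I, ← Complex.exp_add]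
      congr 1; push_cast; ring
    rw [hdir, map_add, map_smul, map_smul, e1, e2]
    simp only [Dx, Dy, Complex.real_smul, Function.comp]
    push_cast
    generalize fderiv ℝ v (r * Complex.exp (θ * Complex.I)) 1 = X
    generalize fderiv ℝ v (r * Complex.exp (θ * Complex.I)) Complex.I = Y
    generalize Complex.exp (-(l * θ) * Complex.I) = E
    linear_combination (-(r * Complex.sin θ * X * E) + r * Complex.cos θ * Y * E : ℂ)
      * Complex.I_sq
  have hint := intervalIntegral.integral_eq_sub_of_hasDerivAt (a := 0) (b := 2 * Real.pi)
    (fun θ _ => hder θ) (Continuous.intervalIntegrable (by fun_prop) _ _)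
  have hper : Complex.exp (-(l * (2 * Real.pi)) * Complex.I) = 1 := by
    rw [Complex.exp_eq_one_iff]
    exact ⟨-l, by push_cast; ring⟩
  have i0 := c0.intervalIntegrable (μ := MeasureTheory.volume) 0 (2 * Real.pi)
  have ix1 := cx1.intervalIntegrable (μ := MeasureTheory.volume) 0 (2 * Real.pi)
  have ix2 := cx2.intervalIntegrable (μ := MeasureTheory.volume) 0 (2 * Real.pi)
  have iy1 := cy1.intervalIntegrable (μ := MeasureTheory.volume) 0 (2 * Real.pi)
  have iy2 := cy2.intervalIntegrable (μ := MeasureTheory.volume) 0 (2 * Real.pi)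
  rw [intervalIntegral.integral_sub
      (((ix1.sub ix2).sub ((iy1.add iy2).const_mul _)).const_mul _) (i0.const_mul _),
    intervalIntegral.integral_const_mul, intervalIntegral.integral_const_mul,
    intervalIntegral.integral_sub (ix1.sub ix2) ((iy1.add iy2).const_mul _),
    intervalIntegral.integral_const_mul,
    intervalIntegral.integral_sub ix1 ix2, intervalIntegral.integral_add iy1 iy2] at hint
  have hbd : (v (r * Complex.exp ((2 * Real.pi : ℝ) * Complex.I)) *
        Complex.exp (-(l * (2 * Real.pi : ℝ)) * Complex.I)) -
      v (r * Complex.exp ((0 : ℝ) * Complex.I)) * Complex.exp (-(l * (0 : ℝ)) * Complex.I) = 0 := by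
    push_cast
    rw [hper, Complex.exp_two_pi_mul_I]
    simp
  rw [hbd] at hint
  simp only [fourierCircle]
  refine mul_left_cancel₀ Complex.I_ne_zero ?_
  linear_combination (-(1 / (2 * Real.pi)) : ℂ) * hint

/-- The ratio `(m - n)! / m!` is the inverse of the falling factorial `m (m-1) ⋯ (m-n+1)`, hence
decreasing in `m`; so the index `|l| - 1` is the worst one among `|l ± 1|`. -/
theorem factorial_ratio_le {n m m' : ℕ} (hn : n ≤ m) (h : m ≤ m') :
    ((m' - n).factorial : ℝ) / m'.factorial ≤ ((m - n).factorial : ℝ) / m.factorial := by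
  rw [div_le_div_iff₀ (by positivity) (by positivity)]
  have h1 := Nat.factorial_mul_descFactorial hn
  have h2 := Nat.factorial_mul_descFactorial (hn.trans h)
  have h3 : m.descFactorial n ≤ m'.descFactorial n := Nat.descFactorial_le n h
  rw [← h1, ← h2]
  norm_cast
  calc _ = (m' - n).factorial * (m - n).factorial * m.descFactorial n := by ring
    _ ≤ (m' - n).factorial * (m - n).factorial * m'.descFactorial n :=
        Nat.mul_le_mul_left _ h3
    _ = _ := by ring

/-- The decay estimate obtained by iterating `fourierCircle_recursion`. Only the derivatives of top order `n`
have to be bounded by `M`, and only on the closed disk. -/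
theorem fourierCircle_bound {r : ℝ} (hr : 0 < r) {U : Set ℂ} (hU : IsOpen U)
    (hUb : Metric.closedBall (0:ℂ) r ⊆ U) {M : ℝ} (n : ℕ) {v : ℂ → ℂ}
    (hv : ContDiffOn ℝ n v U)
    (hM : ∀ a b : ℕ, a + b = n → ∀ z ∈ Metric.closedBall (0:ℂ) r, ‖Dx^[a] (Dy^[b] v) z‖ ≤ M)
    (l : ℤ) (hl : n ≤ l.natAbs) :
    ‖fourierCircle r v l‖ ≤
      (2 * r) ^ n * (((l.natAbs - n).factorial : ℝ) / l.natAbs.factorial) * M := by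
  induction n generalizing v l with
  | zero =>
    have h0 : ∀ z ∈ Metric.closedBall (0:ℂ) r, ‖v z‖ ≤ M := hM 0 0 rfl
    have hb := intervalIntegral.norm_integral_le_of_norm_le_const (a := 0) (b := 2 * Real.pi)
      (C := M) (f := fun θ : ℝ => v (r * Complex.exp (θ * Complex.I)) *
        Complex.exp (-(l * θ) * Complex.I)) (fun θ _ => by
        have : Complex.exp (-(l * θ) * Complex.I)
            = Complex.exp (((-(l * θ) : ℝ) : ℂ) * Complex.I) := by push_cast; rfl
        rw [norm_mul, this, Complex.norm_exp_ofReal_mul_I, mul_one]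
        exact h0 _ (circle_mem hr θ))
    have hpi := Real.pi_pos
    rw [sub_zero, abs_of_pos (by positivity)] at hb
    have hf : (l.natAbs.factorial : ℝ) ≠ 0 := by positivity
    simp only [pow_zero, Nat.sub_zero, div_self hf, one_mul]
    rw [fourierCircle, norm_mul]
    have hnorm : ‖(1 / (2 * Real.pi) : ℂ)‖ = 1 / (2 * Real.pi) := by
      simp [abs_of_pos hpi]
    rw [hnorm]
    calc _ ≤ 1 / (2 * Real.pi) * (M * (2 * Real.pi)) := by gcongr
      _ = M := by field_simp
  | succ n ih =>
    have hM0 : 0 ≤ M := (norm_nonneg _).trans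
      (hM (n + 1) 0 rfl 0 (Metric.mem_closedBall_self hr.le))
    obtain ⟨m, hm⟩ : ∃ m, l.natAbs = m + 1 := ⟨l.natAbs - 1, by omega⟩
    have hnm : n ≤ m := by omega
    set B : ℝ := (2 * r) ^ n * (((m - n).factorial : ℝ) / m.factorial) * M with hB
    have hstep : ∀ w : ℂ → ℂ, ContDiffOn ℝ n w U →
        (∀ a b : ℕ, a + b = n → ∀ z ∈ Metric.closedBall (0:ℂ) r,
          ‖Dx^[a] (Dy^[b] w) z‖ ≤ M) →
        ∀ k : ℤ, m ≤ k.natAbs → ‖fourierCircle r w k‖ ≤ B := fun w hw hwM k hk => by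
      refine (ih hw hwM k (hnm.trans hk)).trans ?_
      have := factorial_ratio_le hnm hk
      rw [hB]
      gcongr
    have hX := hstep (Dx v) (Dx_contDiffOn hU hv) fun a b hab z hz => by
      have h1 := Dx_iter_eqOn hU a
        (Dy_iter_Dx hU b (hv.of_le (by norm_cast; omega))) (hUb hz)
      rw [h1]
      exact hM (a + 1) b (by omega) z hz
    have hY := hstep (Dy v) (Dy_contDiffOn hU hv) fun a b hab z hz =>
      hM a (b + 1) (by omega) z hz
    have hrec := congrArg norm (fourierCircle_recursion hr hU hUb
      (hv.of_le (by norm_cast; omega)) l)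
    have hlm : ‖(l : ℂ)‖ = (m + 1 : ℝ) := by
      rw [Complex.norm_intCast, ← Int.cast_abs, Int.abs_eq_natAbs, hm]
      push_cast; rfl
    have hr2 : ‖(r / 2 : ℂ)‖ = r / 2 := by simp [abs_of_pos hr]
    rw [norm_mul, norm_mul, hlm, hr2] at hrec
    have htri : ‖(fourierCircle r (Dx v) (l - 1) - fourierCircle r (Dx v) (l + 1)) -
        Complex.I * (fourierCircle r (Dy v) (l - 1) + fourierCircle r (Dy v) (l + 1))‖
        ≤ (B + B) + (B + B) := by
      refine (norm_sub_le _ _).trans (add_le_add ?_ ?_)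
      · exact (norm_sub_le _ _).trans (add_le_add (hX _ (by omega)) (hX _ (by omega)))
      · rw [norm_mul, Complex.norm_I, one_mul]
        exact (norm_add_le _ _).trans (add_le_add (hY _ (by omega)) (hY _ (by omega)))
    have hle : (m + 1 : ℝ) * ‖fourierCircle r v l‖ ≤ 2 * r * B := by
      rw [hrec]
      calc _ ≤ r / 2 * ((B + B) + (B + B)) := by gcongr
        _ = 2 * r * B := by ring
    rw [hm, Nat.add_sub_add_right, Nat.factorial_succ]
    have hpos : (0 : ℝ) < m + 1 := by positivity
    have hf : (m.factorial : ℝ) ≠ 0 := by positivity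
    calc ‖fourierCircle r v l‖ ≤ 2 * r * B / (m + 1) := by
          rw [le_div_iff₀ hpos]; linarith
      _ = _ := by
          rw [hB]; push_cast; field_simp; ring

/-! ### Comparison with the norm on the disk -/

theorem le_ckNormDisk {k : ℕ} {r : ℝ} {U : Set ℂ} (hU : IsOpen U)
    (hUb : Metric.closedBall (0:ℂ) r ⊆ U) {u : ℂ → ℂ} (hu : ContDiffOn ℝ k u U)
    {a b : ℕ} (hab : a + b ≤ k) {z : ℂ} (hz : z ∈ Metric.closedBall (0:ℂ) r) :
    ‖Dx^[a] (Dy^[b] u) z‖ ≤ ckNormDisk k r u := by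
  have hc : ContinuousOn (Dx^[a] (Dy^[b] u)) (Metric.closedBall (0:ℂ) r) :=
    ((Dx_iter_contDiffOn (n := 0) hU a (Dy_iter_contDiffOn hU b
      (hu.of_le (by norm_cast; omega)))).continuousOn).mono hUb
  -- Both suprema in `ckNormDisk` must be bounded above in order to dominate their terms.
  have hbdd : BddAbove (Set.range fun z : Metric.closedBall (0:ℂ) r =>
      ‖Dx^[a] (Dy^[b] u) z.1‖) := by
    obtain ⟨C, hC⟩ := (isCompact_closedBall (0:ℂ) r).exists_bound_of_continuousOn hc
    exact ⟨C, by rintro _ ⟨y, rfl⟩; exact hC y.1 y.2⟩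
  have hfin : Finite {p : ℕ × ℕ // p.1 + p.2 ≤ k} :=
    (((Set.finite_Iic k).prod (Set.finite_Iic k)).subset fun p (hp : p.1 + p.2 ≤ k) =>
      ⟨by simp only [Set.mem_Iic]; omega, by simp only [Set.mem_Iic]; omega⟩).to_subtype
  have h1 := le_ciSup hbdd ⟨z, hz⟩
  have h2 := le_ciSup (f := fun p : {p : ℕ × ℕ // p.1 + p.2 ≤ k} =>
    ⨆ z : Metric.closedBall (0:ℂ) r, ‖Dx^[p.1.1] (Dy^[p.1.2] u) z.1‖)
    (Set.finite_range _).bddAbove ⟨(a, b), hab⟩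
  exact h1.trans h2

theorem fourier_coefficient_smooth_decay
    (N : ℕ) (r : ℝ) (hr : 0 < r) (u : ℂ → ℂ) (U : Set ℂ) (hU : IsOpen U)
    (hUb : Metric.closedBall (0:ℂ) r ⊆ U) (hu : ContDiffOn ℝ (N + 1) u U) :
    ∀ l : ℤ, (N : ℤ) + 1 ≤ |l| →
      ‖(1 / (2 * Real.pi) : ℂ) *
          ∫ θ in (0:ℝ)..(2 * Real.pi),
            u (r * Complex.exp (θ * Complex.I)) * Complex.exp (-(l * θ) * Complex.I)‖ ≤
        (2 * r) ^ (N + 1) *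
          ((Nat.factorial (l.natAbs - (N + 1)) : ℝ) / (Nat.factorial l.natAbs)) *
          ckNormDisk (N + 1) r u := by
  intro l hl
  have hu' : ContDiffOn ℝ (N + 1 : ℕ) u U := by exact_mod_cast hu
  exact fourierCircle_bound hr hU hUb (N + 1) hu'
    (fun a b hab z hz => le_ckNormDisk hU hUb hu' hab.le hz) l (by rw [Int.abs_eq_natAbs] at hl; omega)
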